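/- Let ν ≥ 1 be an integer and let a, b > 0 with a ≠ b be two zeros of J_ν (i.e. J_ν(a) = J_ν(b) = 0). Then (a^2 − b^2) ∫_0^1 r^3 J_ν(a r) J_ν(b r) dr = 4 a ∫_0^1 r^2 J_{ν−1}(a r) J_ν(b r) dr. -/

import Mathlib

open MeasureTheory

/-- Bessel function of the first kind of integer order `ν`, defined by its
everywhere-convergent power series. -/
noncomputable def besselJ (ν : ℕ) (x : ℝ) : ℝ :=
  ∑' m : ℕ, ((-1 : ℝ) ^ m / ((Nat.factorial m : ℝ) * (Nat.factorial (m + ν) : ℝ)))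
    * (x / 2) ^ (2 * m + ν)

noncomputable def besselE (ν : ℕ) (t : ℝ) : ℝ :=
  ∑' m : ℕ, ((-1 : ℝ) ^ m / ((Nat.factorial m : ℝ) * (Nat.factorial (m + ν) : ℝ))) * t ^ m

lemma besselE_bound (ν m : ℕ) (t R : ℝ) (h : |t| ≤ R) :
    ‖((-1 : ℝ) ^ m / ((Nat.factorial m : ℝ) * (Nat.factorial (m + ν) : ℝ))) * t ^ m‖
      ≤ R ^ m / (Nat.factorial m : ℝ) := by
  have h1 : (1 : ℝ) ≤ (Nat.factorial (m + ν) : ℝ) := by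
    exact_mod_cast Nat.factorial_pos _
  have h0 : (0 : ℝ) < (Nat.factorial m : ℝ) := by
    exact_mod_cast Nat.factorial_pos _
  have hR : |t| ^ m ≤ R ^ m := by gcongr
  have hR0 : 0 ≤ R ^ m := le_trans (by positivity) hR
  rw [norm_mul, norm_div, norm_pow, norm_pow, norm_neg, norm_one, one_pow, Real.norm_eq_abs,
    Real.norm_eq_abs, abs_of_pos (by positivity), div_mul_eq_mul_div, one_mul]
  apply div_le_div₀ hR0 hR h0
  nlinarith

lemma besselE_summable (ν : ℕ) (t : ℝ) :
    Summable (fun m : ℕ =>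
      ((-1 : ℝ) ^ m / ((Nat.factorial m : ℝ) * (Nat.factorial (m + ν) : ℝ))) * t ^ m) :=
  Summable.of_norm_bounded (Real.summable_pow_div_factorial |t|)
    (fun m => besselE_bound ν m t |t| le_rfl)

lemma besselE_shift (ν m : ℕ) (t : ℝ) :
    ((-1 : ℝ) ^ (m + 1) / ((Nat.factorial (m + 1) : ℝ) * (Nat.factorial (m + 1 + ν) : ℝ)))
      * (((m + 1 : ℕ) : ℝ) * t ^ m) =
    -(((-1 : ℝ) ^ m / ((Nat.factorial m : ℝ) * (Nat.factorial (m + (ν + 1)) : ℝ))) * t ^ m) := by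
  have h0 : (Nat.factorial m : ℝ) ≠ 0 := by exact_mod_cast Nat.factorial_ne_zero _
  have h1 : (Nat.factorial (m + (ν + 1)) : ℝ) ≠ 0 := by exact_mod_cast Nat.factorial_ne_zero _
  have h2 : (m : ℝ) + 1 ≠ 0 := by positivity
  rw [show m + 1 + ν = m + (ν + 1) by ring, Nat.factorial_succ m]
  push_cast
  field_simp
  ring

lemma besselE_hasDerivAt (ν : ℕ) (t : ℝ) :
    HasDerivAt (besselE ν) (-besselE (ν + 1) t) t := by
  set R := |t| + 1 with hR
  have hu : Summable (fun m : ℕ => if m = 0 then (0 : ℝ) else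
      R ^ (m - 1) / (Nat.factorial (m - 1) : ℝ)) := by
    rw [← summable_nat_add_iff 1]
    simpa using Real.summable_pow_div_factorial R
  have key := hasDerivAt_tsum_of_isPreconnected (t := Metric.ball (0 : ℝ) R)
    (g := fun (m : ℕ) (t : ℝ) =>
      ((-1 : ℝ) ^ m / ((Nat.factorial m : ℝ) * (Nat.factorial (m + ν) : ℝ))) * t ^ m)
    (g' := fun (m : ℕ) (t : ℝ) =>
      ((-1 : ℝ) ^ m / ((Nat.factorial m : ℝ) * (Nat.factorial (m + ν) : ℝ)))
        * ((m : ℝ) * t ^ (m - 1)))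
    (y₀ := t) (y := t) hu Metric.isOpen_ball (convex_ball _ _).isPreconnected
    (fun m y _ => (hasDerivAt_pow m y).const_mul _)
    (by
      intro m y hy
      have hy : |y| ≤ R := by simpa using (Metric.mem_ball.1 hy).le
      rcases m with _ | m
      · simp
      · have := besselE_bound (ν + 1) m y R hy
        rw [Nat.add_sub_cancel, besselE_shift, norm_neg]
        simpa using this)
    (by simp [hR]) (besselE_summable ν t) (by simp [hR])
  have hs : Summable (fun m : ℕ =>
      ((-1 : ℝ) ^ m / ((Nat.factorial m : ℝ) * (Nat.factorial (m + ν) : ℝ)))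
        * ((m : ℝ) * t ^ (m - 1))) := by
    rw [← summable_nat_add_iff 1]
    simp only [Nat.add_sub_cancel, besselE_shift]
    exact (besselE_summable (ν + 1) t).neg
  rw [hs.tsum_eq_zero_add] at key
  simp only [Nat.add_sub_cancel, besselE_shift, tsum_neg] at key
  have hz : ((-1 : ℝ) ^ 0 / ((Nat.factorial 0 : ℝ) * (Nat.factorial (0 + ν) : ℝ)))
        * (((0 : ℕ) : ℝ) * t ^ (0 - 1)) = 0 := by simp
  rw [hz, zero_add] at key
  exact key

lemma besselE_rec (ν : ℕ) (t : ℝ) :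
    besselE ν t = (ν + 1) * besselE (ν + 1) t - t * besselE (ν + 2) t := by
  have e : ∀ m : ℕ, ((-1 : ℝ) ^ m / ((Nat.factorial m : ℝ) * (Nat.factorial (m + ν) : ℝ))) * t ^ m
      = (ν + 1) * (((-1 : ℝ) ^ m / ((Nat.factorial m : ℝ) * (Nat.factorial (m + (ν + 1)) : ℝ)))
          * t ^ m)
        + ((-1 : ℝ) ^ m / ((Nat.factorial m : ℝ) * (Nat.factorial (m + (ν + 1)) : ℝ)))
          * ((m : ℝ) * t ^ m) := by
    intro m
    have h0 : (Nat.factorial m : ℝ) ≠ 0 := by exact_mod_cast Nat.factorial_ne_zero _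
    have h1 : (Nat.factorial (m + ν) : ℝ) ≠ 0 := by exact_mod_cast Nat.factorial_ne_zero _
    have h2 : (m : ℝ) + ν + 1 ≠ 0 := by positivity
    rw [← add_assoc m ν 1, Nat.factorial_succ (m + ν)]
    push_cast
    field_simp
    ring
  have e2 : ∀ m : ℕ, ((-1 : ℝ) ^ (m + 1) / ((Nat.factorial (m + 1) : ℝ)
        * (Nat.factorial (m + 1 + (ν + 1)) : ℝ))) * (((m + 1 : ℕ) : ℝ) * t ^ (m + 1))
      = -t * (((-1 : ℝ) ^ m / ((Nat.factorial m : ℝ) * (Nat.factorial (m + (ν + 2)) : ℝ)))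
        * t ^ m) := by
    intro m
    have := besselE_shift (ν + 1) m t
    rw [pow_succ t]
    linear_combination t * this
  have hs : Summable (fun m : ℕ =>
      ((-1 : ℝ) ^ m / ((Nat.factorial m : ℝ) * (Nat.factorial (m + (ν + 1)) : ℝ)))
        * ((m : ℝ) * t ^ m)) := by
    rw [← summable_nat_add_iff 1]
    simp only [e2]
    exact (besselE_summable (ν + 2) t).mul_left _
  have h3 : besselE ν t = (ν + 1) * besselE (ν + 1) t + ∑' m : ℕ,
      ((-1 : ℝ) ^ m / ((Nat.factorial m : ℝ) * (Nat.factorial (m + (ν + 1)) : ℝ)))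
        * ((m : ℝ) * t ^ m) := by
    unfold besselE
    rw [tsum_congr e, ((besselE_summable (ν + 1) t).mul_left _).tsum_add hs, tsum_mul_left]
  rw [h3, hs.tsum_eq_zero_add, tsum_congr e2, tsum_mul_left]
  simp [besselE]
  ring

lemma besselJ_eq (ν : ℕ) (x : ℝ) : besselJ ν x = (x / 2) ^ ν * besselE ν ((x / 2) ^ 2) := by
  unfold besselJ besselE
  rw [← tsum_mul_left]
  refine tsum_congr fun m => ?_
  rw [pow_add, pow_mul]
  ring

lemma besselJ_deriv (ν : ℕ) (x : ℝ) : ∃ d, HasDerivAt (besselJ ν) d x ∧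
    x * d = ν * besselJ ν x - 2 * (x / 2) ^ (ν + 2) * besselE (ν + 1) ((x / 2) ^ 2) := by
  have hf : besselJ ν = fun x => (x / 2) ^ ν * besselE ν ((x / 2) ^ 2) := funext (besselJ_eq ν)
  have h1 : HasDerivAt (fun x : ℝ => x / 2) (1 / 2) x := (hasDerivAt_id x).div_const 2
  have h2 := (h1.pow ν).mul ((besselE_hasDerivAt ν ((x / 2) ^ 2)).comp x (h1.pow 2))
  rw [besselJ_eq ν x, hf]
  refine ⟨_, h2, ?_⟩
  rcases ν with _ | ν
  · simp; ring
  · simp; ring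

/-- Derivatives of the pair, scaled. -/
lemma besselJ_pair (n : ℕ) (a r : ℝ) : ∃ d D, HasDerivAt (fun r => besselJ (n + 1) (a * r)) d r ∧
    HasDerivAt (fun r => besselJ n (a * r)) D r ∧
    r * d = a * r * besselJ n (a * r) - (n + 1) * besselJ (n + 1) (a * r) ∧
    r * D = n * besselJ n (a * r) - a * r * besselJ (n + 1) (a * r) := by
  obtain ⟨d, hd, ed⟩ := besselJ_deriv (n + 1) (a * r)
  obtain ⟨D, hD, eD⟩ := besselJ_deriv n (a * r)
  have h1 : HasDerivAt (fun r : ℝ => a * r) a r := by simpa using (hasDerivAt_id r).const_mul a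
  refine ⟨d * a, D * a, hd.comp r h1, hD.comp r h1, ?_, ?_⟩
  · have h := besselE_rec n ((a * r / 2) ^ 2)
    rw [besselJ_eq] at ed
    rw [besselJ_eq, besselJ_eq, h]
    push_cast at ed
    linear_combination ed
  · rw [besselJ_eq (n + 1)]
    linear_combination eD

lemma besselJ_continuous (ν : ℕ) : Continuous (besselJ ν) :=
  continuous_iff_continuousAt.2 fun x => (besselJ_deriv ν x).choose_spec.1.continuousAt

/-- If `ν ≥ 1` and `a ≠ b` are positive zeros of `J_ν` then
`(a² - b²) ∫_0^1 r³ J_ν(ar) J_ν(br) dr = 4a ∫_0^1 r² J_{ν-1}(ar) J_ν(br) dr`. -/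
theorem stmt5 (ν : ℕ) (hν : 1 ≤ ν) (a b : ℝ) (ha : 0 < a) (hb : 0 < b)
    (hab : a ≠ b) (hJa : besselJ ν a = 0) (hJb : besselJ ν b = 0) :
    (a ^ 2 - b ^ 2) * ∫ r in (0 : ℝ)..1, r ^ 3 * besselJ ν (a * r) * besselJ ν (b * r) =
      4 * a * ∫ r in (0 : ℝ)..1, r ^ 2 * besselJ (ν - 1) (a * r) * besselJ ν (b * r) := by
  obtain ⟨n, rfl⟩ : ∃ n, ν = n + 1 := ⟨ν - 1, by omega⟩
  rw [Nat.add_sub_cancel]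
  have c0 := besselJ_continuous n
  have c1 := besselJ_continuous (n + 1)
  set W : ℝ → ℝ := fun r => r * (b * (besselJ (n + 1) (a * r) * besselJ n (b * r))
    - a * (besselJ (n + 1) (b * r) * besselJ n (a * r))) with hW
  have dW : ∀ r, HasDerivAt W
      ((a ^ 2 - b ^ 2) * (r * besselJ (n + 1) (a * r) * besselJ (n + 1) (b * r))) r := by
    intro r
    obtain ⟨d, D, hd, hD, ed, eD⟩ := besselJ_pair n a r
    obtain ⟨d', D', hd', hD', ed', eD'⟩ := besselJ_pair n b r
    have := (hasDerivAt_id r).mul (((hd.mul hD').const_mul b).sub ((hd'.mul hD).const_mul a))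
    refine this.congr_deriv ?_
    simp only [id, Pi.mul_apply, Pi.sub_apply]
    linear_combination b * besselJ n (b * r) * ed + b * besselJ (n + 1) (a * r) * eD'
      - a * besselJ n (a * r) * ed' - a * besselJ (n + 1) (b * r) * eD
  have I1 := intervalIntegral.integral_eq_sub_of_hasDerivAt (a := 0) (b := 1)
    (fun r _ => dW r) (Continuous.intervalIntegrable (by fun_prop) _ _)
  have W1 : W 1 = 0 := by simp [hW, hJa, hJb]
  have W0 : W 0 = 0 := by simp [hW]
  rw [intervalIntegral.integral_const_mul, W1, W0, sub_zero] at I1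
  have hne : a ^ 2 - b ^ 2 ≠ 0 := by
    have : a - b ≠ 0 := sub_ne_zero.2 hab
    have h2 : a + b ≠ 0 := by positivity
    rw [sq_sub_sq]; exact mul_ne_zero h2 this
  have I0 := (mul_eq_zero.1 I1).resolve_left hne
  set F : ℝ → ℝ := fun r => r ^ 2 * (W r - 2 * (besselJ (n + 1) (a * r) * besselJ (n + 1) (b * r)))
    with hF
  have dF : ∀ r, HasDerivAt F
      ((a ^ 2 - b ^ 2) * (r ^ 3 * besselJ (n + 1) (a * r) * besselJ (n + 1) (b * r))
        - 4 * a * (r ^ 2 * besselJ n (a * r) * besselJ (n + 1) (b * r))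
        + 4 * n * (r * besselJ (n + 1) (a * r) * besselJ (n + 1) (b * r))) r := by
    intro r
    obtain ⟨d, D, hd, hD, ed, eD⟩ := besselJ_pair n a r
    obtain ⟨d', D', hd', hD', ed', eD'⟩ := besselJ_pair n b r
    have := (hasDerivAt_pow 2 r).mul ((dW r).sub ((hd.mul hd').const_mul 2))
    refine this.congr_deriv ?_
    simp only [hW, Pi.mul_apply, Pi.sub_apply]
    push_cast
    linear_combination - 2 * r * besselJ (n + 1) (b * r) * ed
      - 2 * r * besselJ (n + 1) (a * r) * ed'
  have I2 := intervalIntegral.integral_eq_sub_of_hasDerivAt (a := 0) (b := 1)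
    (fun r _ => dF r) (Continuous.intervalIntegrable (by fun_prop) _ _)
  have F1 : F 1 = 0 := by simp [hF, W1, hJa, hJb]
  have F0 : F 0 = 0 := by simp [hF]
  rw [F1, F0, intervalIntegral.integral_add (Continuous.intervalIntegrable (by fun_prop) _ _)
    (Continuous.intervalIntegrable (by fun_prop) _ _),
    intervalIntegral.integral_sub (Continuous.intervalIntegrable (by fun_prop) _ _)
    (Continuous.intervalIntegrable (by fun_prop) _ _), intervalIntegral.integral_const_mul,
    intervalIntegral.integral_const_mul, intervalIntegral.integral_const_mul, I0] at I2
  linarith
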